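/- arXiv:2207.11946 — 2 statements merged into one kernel-verified Lean document; each statement's English description precedes it below -/
import Mathlib

section
/- Moment-generating-function bound for the bit metric: for every s with −1 < s < 0, the expectation g(s) = E[2^{s·φ(U;Y)}] = ∑_u q(u) ∑_y W(u,y)·(W(u,y)/P(y))^s satisfies g(s) ≤ 2^{−(1+s)·E₀(−s/(1+s), W)}. -/
/-!
Put `A y = ∑ u, q u * W u y ^ (1 + s)`. Swapping the sums gives `g s = ∑ y, A y * P y ^ (-s)`, and
Hölder's inequality with the conjugate exponents `1 / (1 + s)` and `1 / (-s)`
(`Real.inner_le_Lp_mul_Lq_of_nonneg`) bounds this by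
`(∑ y, A y ^ (1 / (1 + s))) ^ (1 + s) * (∑ y, P y) ^ (-s)`. The second factor is `1` because `P` is
a probability distribution, and the first is `2 ^ (-(1 + s) * E₀ ρ)` for `ρ = -s / (1 + s)`.
-/

open Finset

/-- Moment-generating-function bound for the bit metric: for every
`s` with `−1 < s < 0`, the expectation
`g(s) = E[2^{s·φ(U;Y)}] = ∑_u q(u) ∑_y W(u,y)·(W(u,y)/P(y))^s`
satisfies `g(s) ≤ 2^{−(1+s)·E₀(−s/(1+s), W)}`. -/
theorem bit_metric_mgf_bound
    {X Ω : Type*} [Fintype X] [Fintype Ω]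
    (q : X → ℝ) (W : X → Ω → ℝ)
    (hq0 : ∀ u, 0 ≤ q u) (hq1 : ∑ u, q u = 1)
    (hW0 : ∀ u y, 0 < W u y) (hW1 : ∀ u, ∑ y, W u y = 1)
    (P : Ω → ℝ) (hP : ∀ y, P y = ∑ u, q u * W u y)
    (E₀ : ℝ → ℝ)
    (hE₀ : ∀ ρ, E₀ ρ =
      - Real.logb 2 (∑ y, (∑ u, q u * W u y ^ ((1 : ℝ)/(1+ρ))) ^ (1+ρ)))
    (g : ℝ → ℝ)
    (hg : ∀ s, g s = ∑ u, q u * ∑ y, W u y * (W u y / P y) ^ s)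
    (s : ℝ) (hs1 : -1 < s) (hs0 : s < 0) :
    g s ≤ (2 : ℝ) ^ (-(1+s) * E₀ (-s/(1+s))) := by
  have hs1' : 0 < 1 + s := by linarith
  -- The exponents in `E₀` simplify: `1 + ρ = 1 / (1 + s)` at `ρ = -s / (1 + s)`.
  have hρ : 1 + -s / (1 + s) = 1 / (1 + s) := by field_simp; ring
  obtain ⟨u₀, -, hu₀⟩ : ∃ u ∈ (univ : Finset X), 0 < q u := by
    apply exists_lt_of_sum_lt
    simp [hq1]
  have hpos : ∀ f : X → ℝ, (∀ u, 0 < f u) → 0 < ∑ u, q u * f u := fun f hf =>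
    sum_pos' (fun u _ => mul_nonneg (hq0 u) (hf u).le) ⟨u₀, mem_univ _, mul_pos hu₀ (hf u₀)⟩
  have hPpos : ∀ y, 0 < P y := fun y => hP y ▸ hpos _ fun u => hW0 u y
  have hPsum : ∑ y, P y = 1 := by
    simp_rw [hP]
    rw [sum_comm]
    simp_rw [← mul_sum, hW1, mul_one, hq1]
  set A : Ω → ℝ := fun y => ∑ u, q u * W u y ^ (1 + s) with hA
  have hApos : ∀ y, 0 < A y := fun y => hpos _ fun u => Real.rpow_pos_of_pos (hW0 u y) _
  have hΩ : (univ : Finset Ω).Nonempty := by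
    by_contra h
    rw [not_nonempty_iff_eq_empty] at h
    simp [h] at hPsum
  have hSpos : 0 < ∑ y, A y ^ (1 / (1 + s)) :=
    sum_pos (fun y _ => Real.rpow_pos_of_pos (hApos y) _) hΩ
  have hgA : g s = ∑ y, A y * P y ^ (-s) := by
    rw [hg]
    simp_rw [mul_sum]
    rw [sum_comm]
    refine sum_congr rfl fun y _ => ?_
    rw [hA, sum_mul]
    refine sum_congr rfl fun u _ => ?_
    rw [Real.div_rpow (hW0 u y).le (hPpos y).le, Real.rpow_neg (hPpos y).le,
      Real.rpow_add (hW0 u y), Real.rpow_one]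
    ring
  have hE : (2 : ℝ) ^ (-(1 + s) * E₀ (-s / (1 + s))) = (∑ y, A y ^ (1 / (1 + s))) ^ (1 + s) := by
    rw [hE₀, hρ, one_div_one_div, neg_mul_neg, mul_comm, Real.rpow_mul (by norm_num),
      Real.rpow_logb (by norm_num) (by norm_num) hSpos]
  have hpq : (1 / (1 + s)).HolderConjugate (1 / -s) := by
    rw [Real.holderConjugate_iff]
    refine ⟨by rw [lt_div_iff₀ hs1']; linarith, ?_⟩
    simp
  have hPpow : ∀ y, (P y ^ (-s)) ^ (1 / -s) = P y := fun y => by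
    rw [← Real.rpow_mul (hPpos y).le, mul_one_div_cancel (by linarith), Real.rpow_one]
  have hHolder := Real.inner_le_Lp_mul_Lq_of_nonneg univ hpq (f := A) (g := fun y => P y ^ (-s))
    (fun y _ => (hApos y).le) (fun y _ => Real.rpow_nonneg (hPpos y).le _)
  simp only [hPpow, hPsum, Real.one_rpow, mul_one, one_div_one_div] at hHolder
  rw [hgA, hE]
  exact hHolder
end

section
/- Cutoff-rate bound on the inverse-square-root moment of the likelihood ratio: ∑_u q(u) ∑_y W(u,y)·(W(u,y)/P(y))^{−1/2} ≤ 2^{−E₀(1,W)/2}, i.e. the moment-generating function of the bit metric at s = −1/2 is bounded by 2 raised to minus half the channel cutoff rate. -/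
/-! After exchanging the two sums, the left-hand side is `∑ y, √(P y) * S y` with
`S y = ∑ u, q u * √(W u y)`. Since `∑ y, P y = 1`, the Cauchy–Schwarz inequality bounds it by
`√(∑ y, S y ^ 2)`, which is exactly `2 ^ (-E₀ 1 / 2)`. -/

open Finset

/-- Cutoff-rate bound on the inverse-square-root moment of the
likelihood ratio: `∑_u q(u) ∑_y W(u,y)·(W(u,y)/P(y))^{−1/2} ≤ 2^{−E₀(1,W)/2}`,
i.e. the MGF of the bit metric at `s = −1/2` is bounded by `2` raised to minus
half the channel cutoff rate `E₀(1,W)`. -/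
theorem bit_metric_mgf_cutoff_bound
    {X Ω : Type*} [Fintype X] [Fintype Ω]
    (q : X → ℝ) (W : X → Ω → ℝ)
    (hq0 : ∀ u, 0 ≤ q u) (hq1 : ∑ u, q u = 1)
    (hW0 : ∀ u y, 0 < W u y) (hW1 : ∀ u, ∑ y, W u y = 1)
    (P : Ω → ℝ) (hP : ∀ y, P y = ∑ u, q u * W u y)
    (E₀ : ℝ → ℝ)
    (hE₀ : ∀ ρ, E₀ ρ =
      - Real.logb 2 (∑ y, (∑ u, q u * W u y ^ ((1 : ℝ)/(1+ρ))) ^ (1+ρ))) :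
    ∑ u, q u * ∑ y, W u y * (W u y / P y) ^ (-(1 : ℝ)/2)
      ≤ (2 : ℝ) ^ (-(E₀ 1)/2) := by
  have hqpos : ∃ u, 0 < q u := by
    by_contra! h
    have : ∑ u, q u ≤ 0 := Finset.sum_nonpos fun u _ => h u
    linarith
  obtain ⟨u₀, hu₀⟩ := hqpos
  have hΩ : (Finset.univ : Finset Ω).Nonempty := by
    by_contra h
    have h1 := hW1 u₀
    rw [Finset.not_nonempty_iff_eq_empty.mp h] at h1
    simp at h1
  have hPpos : ∀ y, 0 < P y := fun y => by
    rw [hP]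
    exact Finset.sum_pos' (fun u _ => mul_nonneg (hq0 u) (hW0 u y).le)
      ⟨u₀, Finset.mem_univ _, mul_pos hu₀ (hW0 u₀ y)⟩
  have hPsum : ∑ y, P y = 1 := by
    simp_rw [hP]
    rw [Finset.sum_comm]
    simp_rw [← Finset.mul_sum, hW1, mul_one, hq1]
  have hSpos : ∀ y, 0 < ∑ u, q u * √(W u y) := fun y =>
    Finset.sum_pos' (fun u _ => mul_nonneg (hq0 u) (Real.sqrt_nonneg _))
      ⟨u₀, Finset.mem_univ _, mul_pos hu₀ (Real.sqrt_pos.mpr (hW0 u₀ y))⟩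
  have hApos : 0 < ∑ y, (∑ u, q u * √(W u y)) ^ 2 :=
    Finset.sum_pos (fun y _ => pow_pos (hSpos y) 2) hΩ
  have hterm : ∀ u y, W u y * (W u y / P y) ^ (-(1 : ℝ)/2) = √(P y) * √(W u y) := by
    intro u y
    have hw := Real.sqrt_pos.mpr (hW0 u y)
    rw [neg_div, Real.rpow_neg (div_pos (hW0 u y) (hPpos y)).le, ← Real.sqrt_eq_rpow,
      Real.sqrt_div (hW0 u y).le, inv_div, mul_div_assoc', div_eq_iff hw.ne', mul_assoc,
      Real.mul_self_sqrt (hW0 u y).le, mul_comm]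
  have hL : ∑ u, q u * ∑ y, W u y * (W u y / P y) ^ (-(1 : ℝ)/2)
      = ∑ y, √(P y) * ∑ u, q u * √(W u y) := by
    simp_rw [hterm, Finset.mul_sum]
    rw [Finset.sum_comm]
    exact Finset.sum_congr rfl fun y _ => Finset.sum_congr rfl fun u _ => by ring
  have hE : E₀ 1 = - Real.logb 2 (∑ y, (∑ u, q u * √(W u y)) ^ 2) := by
    rw [hE₀, one_add_one_eq_two]
    simp_rw [Real.rpow_two, ← Real.sqrt_eq_rpow]
  have hR : (2 : ℝ) ^ (-(E₀ 1)/2) = √(∑ y, (∑ u, q u * √(W u y)) ^ 2) := by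
    rw [hE, neg_neg, div_eq_mul_one_div, Real.rpow_mul (by norm_num),
      Real.rpow_logb (by norm_num) (by norm_num) hApos, ← Real.sqrt_eq_rpow]
  rw [hL, hR]
  have hCS := Real.sum_mul_le_sqrt_mul_sqrt Finset.univ (fun y => √(P y))
    (fun y => ∑ u, q u * √(W u y))
  simpa only [Real.sq_sqrt (hPpos _).le, hPsum, Real.sqrt_one, one_mul] using hCS
end
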